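/- arXiv:1908.00736 — 2 statements merged into one kernel-verified Lean document; each statement's English description precedes it below -/
import Mathlib

section
/- Let α > −1 be real, N ≥ 1, and a > 0. For tuples x = (x_1,…,x_N) of pairwise distinct positive reals and y = (y_1,…,y_N) of pairwise distinct positive reals, define q(x,y) := det_{1≤i,j≤N}[ (y_j^{α+1} / x_i^α) · e^{−(x_i² + y_j²)/2} · I_α(x_i y_j) ]. Then, as (x, y) tends to ((a,…,a), (0,…,0)) through such tuples, the ratio q(x,y) / ( (∏_{k=1}^N y_k^{2α+1}) · Δ(x) · Δ(y²) ) converges to a^{N(N−1)/2} · e^{−a²N/2} · 2^{−N(N−1+2α)/2} / ∏_{k=1}^N ( Γ(k) · Γ(α+k) ). -/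
open Filter

/-- The modified Bessel function of the first kind, for `x > 0`,
`I_α(x) = Σ_{k=0}^∞ (x/2)^{2k+α} / (k! Γ(k+α+1))`. -/
noncomputable def besselI (α x : ℝ) : ℝ :=
  ∑' k : ℕ, (x / 2) ^ (2 * (k : ℝ) + α) / ((Nat.factorial k : ℝ) * Real.Gamma ((k : ℝ) + α + 1))

/-- The Vandermonde product `Δ(x) = ∏_{1 ≤ j < k ≤ N} (x_k - x_j)`. -/
def vandermondeProd {N : ℕ} (x : Fin N → ℝ) : ℝ :=
  ∏ p ∈ Finset.univ.filter (fun p : Fin N × Fin N => p.1 < p.2), (x p.2 - x p.1)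

/-!
Put `u = (x / 2)²` and `v = y²`. Up to row and column factors the matrix is `f (u i * v j)` with
`f t = ∑ k, c k * t ^ k` entire. Expanding the powers `(u i) ^ k` and `(v j) ^ k` in the Newton
bases with nodes `u` and `v` factors it as `A u * G u v * (A v)ᵀ`, where `det (A u)` and
`det (A v)` are the Vandermonde determinants and `G u v` is a matrix of divided differences. Unlike
the ratio of determinants, `G` is continuous across coinciding nodes, and at `v = 0` it is upper
triangular with diagonal entries `c 0, …, c (N - 1)`, whatever `u` is.
-/

open Matrix Topology
open scoped Nat NNReal

section NewtonBasis

variable {R : Type*} [CommRing R] {N : ℕ}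

/-- The values `∏_{l < j} (u i - u l)` of the Newton basis polynomials with nodes `u` at the nodes
themselves: the row index is the node, the column index the polynomial. -/
def newtonMatrix (u : Fin N → R) : Matrix (Fin N) (Fin N) R :=
  of fun i j => ∏ l ∈ Finset.Iio j, (u i - u l)

/-- The matrix of multiplication by `t` in the Newton basis of `R[t] / ∏ l, (t - u l)`. -/
def newtonShift (u : Fin N → R) : Matrix (Fin N) (Fin N) R :=
  diagonal u + of fun i j : Fin N => if (j : ℕ) + 1 = i then 1 else 0

/-- The coordinates of `t ^ k` in the Newton basis of `R[t] / ∏ l, (t - u l)`. The `j`-th one is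
the divided difference of `t ^ k` at the first `j + 1` nodes. -/
def newtonCoeff (u : Fin N → R) (k : ℕ) : Fin N → R :=
  newtonShift u ^ k *ᵥ fun j : Fin N => if (j : ℕ) = 0 then 1 else 0

theorem det_newtonMatrix (u : Fin N → R) : (newtonMatrix u).det = (vandermonde u).det := by
  have lowerTriangular : (newtonMatrix u).IsLowerTriangular := fun i _ hij =>
    Finset.prod_eq_zero (Finset.mem_Iio.2 hij) (sub_self (u i))
  rw [det_of_isLowerTriangular _ lowerTriangular, det_vandermonde]
  exact Finset.prod_comm' (by simp)

theorem newtonMatrix_mul_sub_eq_sum (u : Fin N → R) (i j : Fin N) :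
    newtonMatrix u i j * (u i - u j) =
      ∑ l : Fin N, newtonMatrix u i l * if (j : ℕ) + 1 = l then 1 else 0 := by
  have prod_Iic : newtonMatrix u i j * (u i - u j) = ∏ l ∈ Finset.Iic j, (u i - u l) := by
    rw [Finset.Iic_eq_cons_Iio, Finset.prod_cons, mul_comm, newtonMatrix, of_apply]
  rw [prod_Iic]
  obtain hj | hj := lt_or_ge ((j : ℕ) + 1) N
  · rw [Finset.sum_eq_single ⟨j + 1, hj⟩ (by grind) (by simp), if_pos rfl, mul_one]
    refine Finset.prod_congr ?_ fun _ _ => rfl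
    ext l
    simp only [Finset.mem_Iic, Finset.mem_Iio, Fin.le_def, Fin.lt_def]
    lia
  · rw [Finset.prod_eq_zero (i := i) (Finset.mem_Iic.2 (by lia)) (sub_self _), Finset.sum_eq_zero]
    intro l _
    rw [if_neg (by lia), mul_zero]

theorem diagonal_mul_newtonMatrix (u : Fin N → R) :
    diagonal u * newtonMatrix u = newtonMatrix u * newtonShift u := by
  ext i j
  rw [newtonShift, mul_add, Matrix.add_apply, diagonal_mul, mul_diagonal, mul_apply]
  simp only [of_apply]
  rw [← newtonMatrix_mul_sub_eq_sum]
  ring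

theorem newtonMatrix_mulVec_newtonCoeff (u : Fin N → R) (k : ℕ) :
    newtonMatrix u *ᵥ newtonCoeff u k = fun i => u i ^ k := by
  have newtonMatrix_mul_pow :
      newtonMatrix u * newtonShift u ^ k = diagonal (u ^ k) * newtonMatrix u := by
    rw [← diagonal_pow]
    exact SemiconjBy.pow_right (diagonal_mul_newtonMatrix u).symm k
  ext i
  rw [newtonCoeff, mulVec_mulVec, newtonMatrix_mul_pow, ← mulVec_mulVec, mulVec_diagonal]
  obtain ⟨n, rfl⟩ : ∃ n, N = n + 1 := Nat.exists_eq_add_one.2 i.pos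
  have Iio_zero : Finset.Iio (0 : Fin (n + 1)) = ∅ := Finset.Iio_bot
  simp [mulVec, dotProduct, newtonMatrix, Iio_zero]

theorem newtonCoeff_zero_right (u : Fin N → R) :
    newtonCoeff u 0 = fun j : Fin N => if (j : ℕ) = 0 then 1 else 0 := by
  rw [newtonCoeff, pow_zero, one_mulVec]

theorem newtonCoeff_succ (u : Fin N → R) (k : ℕ) (j : Fin N) :
    newtonCoeff u (k + 1) j = u j * newtonCoeff u k j +
      if h : (j : ℕ) = 0 then 0 else newtonCoeff u k ⟨j - 1, by lia⟩ := by
  rw [newtonCoeff, pow_succ', ← mulVec_mulVec, ← newtonCoeff, newtonShift, add_mulVec,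
    Pi.add_apply, mulVec_diagonal]
  congr 1
  simp only [mulVec, dotProduct, of_apply, ite_mul, one_mul, zero_mul]
  split_ifs with hj
  · exact Finset.sum_eq_zero fun l _ => if_neg (by lia)
  · rw [Finset.sum_eq_single ⟨j - 1, by lia⟩ (by grind) (by simp), if_pos]
    exact Nat.sub_add_cancel (by lia)

theorem newtonCoeff_eq_zero_of_lt (u : Fin N → R) {k : ℕ} {j : Fin N} (h : k < j) :
    newtonCoeff u k j = 0 := by
  induction k generalizing j with
  | zero => simp [newtonCoeff_zero_right, h.ne']
  | succ k ih =>
    rw [newtonCoeff_succ, ih (by lia), dif_neg (by lia), ih (by simp; lia), mul_zero, add_zero]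

theorem newtonCoeff_self (u : Fin N → R) (j : Fin N) : newtonCoeff u j j = 1 := by
  obtain ⟨k, hk⟩ := j
  induction k with
  | zero => simp [newtonCoeff_zero_right]
  | succ k ih =>
    rw [newtonCoeff_succ, newtonCoeff_eq_zero_of_lt u (by simp), mul_zero, zero_add]
    simpa using ih (by lia)

theorem newtonCoeff_zero_left (k : ℕ) (j : Fin N) :
    newtonCoeff (0 : Fin N → R) k j = if k = j then 1 else 0 := by
  induction k generalizing j with
  | zero => simp [newtonCoeff_zero_right, eq_comm]
  | succ k ih =>
    rw [newtonCoeff_succ, Pi.zero_apply, zero_mul, zero_add]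
    grind

end NewtonBasis

section PowerSeries

variable {𝕜 : Type*} [NormedField 𝕜] {N : ℕ} {c : ℕ → 𝕜}

theorem continuous_newtonCoeff (k : ℕ) :
    Continuous fun u : Fin N → 𝕜 => newtonCoeff u k := by
  unfold newtonCoeff newtonShift
  fun_prop

theorem norm_newtonCoeff_le (u : Fin N → 𝕜) (k : ℕ) (j : Fin N) :
    ‖newtonCoeff u k j‖ ≤ (‖u‖ + 1) ^ k := by
  induction k generalizing j with
  | zero =>
    simp only [newtonCoeff_zero_right]
    split_ifs <;> simp
  | succ k ih =>
    have diagonal_le : ‖u j * newtonCoeff u k j‖ ≤ ‖u‖ * (‖u‖ + 1) ^ k := by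
      rw [norm_mul]
      gcongr
      exacts [norm_le_pi_norm u j, ih j]
    rw [newtonCoeff_succ, pow_succ', add_mul, one_mul]
    refine (norm_add_le _ _).trans (add_le_add diagonal_le ?_)
    split_ifs
    · rw [norm_zero]
      positivity
    · exact ih _

/-- The matrix of double divided differences of `(s, t) ↦ ∑ k, c k * (s * t) ^ k` at the initial
segments of the nodes `u` and `v`. -/
noncomputable def dividedDiffMatrix (c : ℕ → 𝕜) (u v : Fin N → 𝕜) : Matrix (Fin N) (Fin N) 𝕜 :=
  of fun i j => ∑' k, c k * (newtonCoeff u k i * newtonCoeff v k j)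

theorem norm_mul_newtonCoeff_mul_newtonCoeff_le (a : 𝕜) {u v : Fin N → 𝕜} {r : ℝ≥0}
    (hu : ‖u‖ ≤ r) (hv : ‖v‖ ≤ r) (k : ℕ) (i j : Fin N) :
    ‖a * (newtonCoeff u k i * newtonCoeff v k j)‖ ≤ ‖a‖ * (((r + 1) ^ 2 : ℝ≥0) : ℝ) ^ k :=
  calc ‖a * (newtonCoeff u k i * newtonCoeff v k j)‖
      ≤ ‖a‖ * ((‖u‖ + 1) ^ k * (‖v‖ + 1) ^ k) := by
        rw [norm_mul, norm_mul]
        gcongr <;> exact norm_newtonCoeff_le _ _ _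
    _ ≤ ‖a‖ * ((r + 1) ^ k * (r + 1) ^ k) := by gcongr
    _ = ‖a‖ * (((r + 1) ^ 2 : ℝ≥0) : ℝ) ^ k := by
        rw [← mul_pow, ← sq]
        norm_cast

theorem det_dividedDiffMatrix_zero_right (c : ℕ → 𝕜) (u : Fin N → 𝕜) :
    (dividedDiffMatrix c u 0).det = ∏ k : Fin N, c k := by
  have entry (i j : Fin N) : dividedDiffMatrix c u 0 i j = c j * newtonCoeff u j i := by
    rw [dividedDiffMatrix, of_apply, tsum_eq_single (j : ℕ)]
    · simp [newtonCoeff_zero_left]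
    · intro k hk
      simp [newtonCoeff_zero_left, hk]
  rw [det_of_isUpperTriangular]
  · simp only [entry, newtonCoeff_self, mul_one]
  · intro i j hij
    rw [entry, newtonCoeff_eq_zero_of_lt (k := j) (j := i) u hij, mul_zero]

variable [CompleteSpace 𝕜]

theorem hasSum_dividedDiffMatrix (hc : ∀ r : ℝ≥0, Summable fun k => ‖c k‖ * (r : ℝ) ^ k)
    (u v : Fin N → 𝕜) :
    HasSum (fun k => c k • vecMulVec (newtonCoeff u k) (newtonCoeff v k))
      (dividedDiffMatrix c u v) :=
  Pi.hasSum.2 fun i => Pi.hasSum.2 fun j =>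
    (Summable.of_norm_bounded (hc ((max ‖u‖₊ ‖v‖₊ + 1) ^ 2)) fun k =>
      norm_mul_newtonCoeff_mul_newtonCoeff_le (c k) (r := max ‖u‖₊ ‖v‖₊) (le_max_left _ _)
        (le_max_right _ _) k i j).hasSum

theorem continuous_dividedDiffMatrix (hc : ∀ r : ℝ≥0, Summable fun k => ‖c k‖ * (r : ℝ) ^ k) :
    Continuous fun p : (Fin N → 𝕜) × (Fin N → 𝕜) => dividedDiffMatrix c p.1 p.2 := by
  refine continuous_matrix fun i j => continuous_iff_continuousAt.2 fun q => ?_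
  have norm_le : ∀ᶠ p in 𝓝 q, ‖p‖ ≤ (‖q‖₊ + 1 : ℝ≥0) :=
    continuous_norm.continuousAt.eventually_le_const (by simp)
  refine tendsto_tsum_of_dominated_convergence (hc ((‖q‖₊ + 1 + 1) ^ 2)) (fun k => ?_) ?_
  · have continuous_newtonCoeff_k := continuous_newtonCoeff (N := N) (𝕜 := 𝕜) k
    have continuous_term : Continuous fun p : (Fin N → 𝕜) × (Fin N → 𝕜) =>
        c k * (newtonCoeff p.1 k i * newtonCoeff p.2 k j) := by fun_prop
    exact continuous_term.tendsto q
  · filter_upwards [norm_le] with p hp k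
    exact norm_mul_newtonCoeff_mul_newtonCoeff_le (c k) ((norm_fst_le p).trans hp)
      ((norm_snd_le p).trans hp) k i j

theorem newtonMatrix_mul_dividedDiffMatrix_mul_transpose
    (hc : ∀ r : ℝ≥0, Summable fun k => ‖c k‖ * (r : ℝ) ^ k) (u v : Fin N → 𝕜) :
    newtonMatrix u * dividedDiffMatrix c u v * (newtonMatrix v)ᵀ =
      of fun i j => ∑' k, c k * (u i * v j) ^ k := by
  have hasSum := ((hasSum_dividedDiffMatrix hc u v).mul_left (newtonMatrix u)).mul_right
    (newtonMatrix v)ᵀ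
  simp only [Matrix.mul_smul, Matrix.smul_mul, mul_vecMulVec, vecMulVec_mul, vecMul_transpose,
    newtonMatrix_mulVec_newtonCoeff] at hasSum
  ext i j
  have hasSum_entry := Pi.hasSum.1 (Pi.hasSum.1 hasSum i) j
  rw [of_apply, ← hasSum_entry.tsum_eq]
  simp only [Matrix.smul_apply, vecMulVec_apply, smul_eq_mul, mul_pow]

theorem det_tsum_mul_pow_eq (hc : ∀ r : ℝ≥0, Summable fun k => ‖c k‖ * (r : ℝ) ^ k)
    (u v : Fin N → 𝕜) :
    (of fun i j => ∑' k, c k * (u i * v j) ^ k).det =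
      (dividedDiffMatrix c u v).det * ((vandermonde u).det * (vandermonde v).det) := by
  rw [← newtonMatrix_mul_dividedDiffMatrix_mul_transpose hc, det_mul, det_mul, det_transpose,
    det_newtonMatrix, det_newtonMatrix]
  ring

theorem tendsto_det_tsum_mul_pow_div_vandermonde
    (hc : ∀ r : ℝ≥0, Summable fun k => ‖c k‖ * (r : ℝ) ^ k) (b : Fin N → 𝕜) :
    Tendsto
      (fun p : (Fin N → 𝕜) × (Fin N → 𝕜) =>
        (of fun i j => ∑' k, c k * (p.1 i * p.2 j) ^ k).det /
          ((vandermonde p.1).det * (vandermonde p.2).det))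
      (𝓝[{p | Function.Injective p.1 ∧ Function.Injective p.2}] (b, 0))
      (𝓝 (∏ k : Fin N, c k)) := by
  rw [← det_dividedDiffMatrix_zero_right c b]
  refine (((continuous_dividedDiffMatrix hc).matrix_det.tendsto (b, 0)).mono_left
    nhdsWithin_le_nhds).congr' ?_
  filter_upwards [self_mem_nhdsWithin] with p ⟨hu, hv⟩
  rw [det_tsum_mul_pow_eq hc, mul_div_cancel_right₀ _
    (mul_ne_zero (det_vandermonde_ne_zero_iff.2 hu) (det_vandermonde_ne_zero_iff.2 hv))]

end PowerSeries

section Bessel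

variable {N : ℕ}

theorem vandermondeProd_eq_det_vandermonde (x : Fin N → ℝ) :
    vandermondeProd x = (vandermonde x).det := by
  rw [vandermondeProd, det_vandermonde, Finset.prod_filter, Fintype.prod_prod_type]
  simp only [← Finset.prod_filter, Finset.filter_lt_eq_Ioi]

theorem vandermondeProd_half_sq (x : Fin N → ℝ) :
    vandermondeProd (fun i => (x i / 2) ^ 2) =
      vandermondeProd x * ∏ p : Fin N × Fin N with p.1 < p.2, (x p.1 + x p.2) / 4 := by
  rw [vandermondeProd, vandermondeProd, ← Finset.prod_mul_distrib]
  exact Finset.prod_congr rfl fun p _ => by ring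

theorem card_filter_fst_lt_snd (N : ℕ) :
    (Finset.univ.filter fun p : Fin N × Fin N => p.1 < p.2).card = N.choose 2 := by
  rw [Finset.card_filter, Fintype.sum_prod_type_right, Nat.choose_two_right, ← Finset.sum_range_id,
    ← Fin.sum_univ_eq_sum_range]
  simp only [← Finset.card_filter, Finset.filter_gt_eq_Iio, Fin.card_Iio]

/-- The coefficients of the entire function `t ↦ ∑ k, t ^ k / (k! Γ(k + α + 1))`, whose value at
`(x / 2) ^ 2` is `(x / 2) ^ (-α) * besselI α x`. Where `k + α + 1` is a pole of `Γ`, the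
convention `(0 : ℝ)⁻¹ = 0` gives the value of the entire function `1 / Γ`. -/
noncomputable def besselCoeff (α : ℝ) (k : ℕ) : ℝ := (k ! * Real.Gamma (k + α + 1))⁻¹

theorem summable_norm_besselCoeff_mul_pow (α : ℝ) (r : ℝ≥0) :
    Summable fun k => ‖besselCoeff α k‖ * (r : ℝ) ^ k := by
  have coeff_eq (k : ℕ) : Complex.regularizedHGFunCoeff 0 {(α : ℂ) + 1} k = besselCoeff α k := by
    have arg_eq : (α : ℂ) + 1 + k = ((k + α + 1 : ℝ) : ℂ) := by push_cast; ring
    simp [Complex.regularizedHGFunCoeff, besselCoeff, arg_eq, -Complex.ofReal_add,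
      Complex.Gamma_ofReal]
  have radius_eq := Complex.radius_regularizedHGFunSeries_eq_top (a := 0) (b := {(α : ℂ) + 1})
    (by simp)
  have summable := FormalMultilinearSeries.summable_norm_mul_pow _
    (radius_eq ▸ ENNReal.coe_lt_top (r := r))
  simpa [Complex.regularizedHGFunSeries, coeff_eq] using summable

theorem besselI_mul_eq (α : ℝ) {x y : ℝ} (hx : 0 < x) (hy : 0 < y) :
    besselI α (x * y) =
      2 ^ (-α) * x ^ α * y ^ α * ∑' k, besselCoeff α k * ((x / 2) ^ 2 * y ^ 2) ^ k := by
  rw [besselI, ← tsum_mul_left]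
  refine tsum_congr fun k => ?_
  have rpow_eq : (x * y / 2) ^ (2 * (k : ℝ) + α) =
      ((x / 2) ^ 2 * y ^ 2) ^ k * (2 ^ (-α) * x ^ α * y ^ α) := by
    rw [Real.rpow_add (by positivity), Real.rpow_mul (by positivity), Real.rpow_natCast,
      Real.rpow_two, Real.div_rpow (by positivity) zero_le_two, Real.mul_rpow hx.le hy.le,
      Real.rpow_neg zero_le_two]
    ring
  rw [rpow_eq, besselCoeff]
  ring

/-- The kernel whose determinants `det (besselKernel α (x i) (y j))` are the `q(x, y)` of the
theorem. -/
noncomputable def besselKernel (α x y : ℝ) : ℝ :=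
  y ^ (α + 1) / x ^ α * Real.exp (-(x ^ 2 + y ^ 2) / 2) * besselI α (x * y)

theorem besselKernel_eq (α : ℝ) {x y : ℝ} (hx : 0 < x) (hy : 0 < y) :
    besselKernel α x y =
      2 ^ (-α) * Real.exp (-x ^ 2 / 2) * (y ^ (2 * α + 1) * Real.exp (-y ^ 2 / 2) *
        ∑' k, besselCoeff α k * ((x / 2) ^ 2 * y ^ 2) ^ k) := by
  have exp_eq : Real.exp (-(x ^ 2 + y ^ 2) / 2) =
      Real.exp (-x ^ 2 / 2) * Real.exp (-y ^ 2 / 2) := by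
    rw [← Real.exp_add]
    ring_nf
  have rpow_eq : y ^ (2 * α + 1) = y ^ (α + 1) * y ^ α := by
    rw [← Real.rpow_add hy]
    ring_nf
  have rpow_ne_zero : x ^ α ≠ 0 := (Real.rpow_pos_of_pos hx α).ne'
  rw [besselKernel, besselI_mul_eq α hx hy, exp_eq, rpow_eq]
  field_simp

theorem det_besselKernel_eq (α : ℝ) {x y : Fin N → ℝ} (hx : ∀ i, 0 < x i) (hy : ∀ j, 0 < y j) :
    (of fun i j => besselKernel α (x i) (y j)).det =
      (∏ i, 2 ^ (-α) * Real.exp (-x i ^ 2 / 2)) *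
        ((∏ j, y j ^ (2 * α + 1) * Real.exp (-y j ^ 2 / 2)) *
          (of fun i j => ∑' k, besselCoeff α k * ((x i / 2) ^ 2 * y j ^ 2) ^ k).det) := by
  rw [← det_mul_row, ← det_mul_column]
  congr 2
  exact funext₂ fun i j => besselKernel_eq α (hx i) (hy j)

/-- The factor depending on `x` in the limit of the normalized determinant at `(x, 0)`. -/
noncomputable def besselLimitFactor (α : ℝ) (x : Fin N → ℝ) : ℝ :=
  (∏ i, 2 ^ (-α) * Real.exp (-x i ^ 2 / 2)) *
    ∏ p : Fin N × Fin N with p.1 < p.2, (x p.1 + x p.2) / 4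

theorem besselLimitFactor_const (α a : ℝ) (N : ℕ) :
    besselLimitFactor α (fun _ : Fin N => a) =
      a ^ (N * (N - 1) / 2) * Real.exp (-a ^ 2 * (N : ℝ) / 2) *
        (2 : ℝ) ^ (-((N : ℝ) * ((N : ℝ) - 1 + 2 * α)) / 2) := by
  have two_rpow_eq : (2 : ℝ) ^ (-((N : ℝ) * ((N : ℝ) - 1 + 2 * α)) / 2) =
      (2 ^ (-α)) ^ N * (2 ^ N.choose 2)⁻¹ := by
    rw [← Real.rpow_natCast, ← Real.rpow_natCast, ← Real.rpow_mul zero_le_two,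
      ← Real.rpow_neg zero_le_two, ← Real.rpow_add two_pos, Nat.cast_choose_two]
    ring_nf
  have exp_eq : Real.exp (-a ^ 2 * (N : ℝ) / 2) = Real.exp (-a ^ 2 / 2) ^ N := by
    rw [← Real.exp_nat_mul]
    ring_nf
  rw [besselLimitFactor, Finset.prod_const, Finset.prod_const, card_filter_fst_lt_snd,
    Finset.card_univ, Fintype.card_fin, ← Nat.choose_two_right, two_rpow_eq, exp_eq,
    show (a + a) / 4 = a / 2 by ring, div_pow, mul_pow]
  ring

theorem det_besselKernel_div_eq (α : ℝ) {x y : Fin N → ℝ} (hx : ∀ i, 0 < x i)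
    (hy : ∀ j, 0 < y j) :
    (of fun i j => besselKernel α (x i) (y j)).det /
        ((∏ k, y k ^ (2 * α + 1)) * vandermondeProd x * vandermondeProd fun k => y k ^ 2) =
      besselLimitFactor α x * (∏ j, Real.exp (-y j ^ 2 / 2)) *
        ((of fun i j => ∑' k, besselCoeff α k * ((x i / 2) ^ 2 * y j ^ 2) ^ k).det /
          ((vandermonde fun i => (x i / 2) ^ 2).det * (vandermonde fun j => y j ^ 2).det)) := by
  have prod_rpow_ne_zero : ∏ k, y k ^ (2 * α + 1) ≠ 0 :=
    Finset.prod_ne_zero_iff.2 fun k _ => (Real.rpow_pos_of_pos (hy k) _).ne'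
  have prod_add_ne_zero : ∏ p : Fin N × Fin N with p.1 < p.2, (x p.1 + x p.2) / 4 ≠ 0 :=
    Finset.prod_ne_zero_iff.2 fun p _ => (div_pos (add_pos (hx p.1) (hx p.2)) four_pos).ne'
  rw [det_besselKernel_eq α hx hy, Finset.prod_mul_distrib (f := fun j => y j ^ (2 * α + 1)),
    ← vandermondeProd_eq_det_vandermonde, ← vandermondeProd_eq_det_vandermonde,
    vandermondeProd_half_sq, besselLimitFactor]
  generalize ∏ k, y k ^ (2 * α + 1) = prodRpow at *
  field_simp

theorem tendsto_half_sq_prodMk_sq (b : Fin N → ℝ) :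
    Tendsto
      (fun p : (Fin N → ℝ) × (Fin N → ℝ) => (fun i => (p.1 i / 2) ^ 2, fun j => p.2 j ^ 2))
      (𝓝[{p | (Function.Injective p.1 ∧ ∀ i, 0 < p.1 i) ∧
        (Function.Injective p.2 ∧ ∀ i, 0 < p.2 i)}] (b, 0))
      (𝓝[{p | Function.Injective p.1 ∧ Function.Injective p.2}]
        (fun i => (b i / 2) ^ 2, 0)) := by
  refine tendsto_nhdsWithin_iff.2 ⟨?_, ?_⟩
  · refine tendsto_nhdsWithin_of_tendsto_nhds (Continuous.tendsto' (by fun_prop) _ _ ?_)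
    ext <;> simp
  · filter_upwards [self_mem_nhdsWithin] with p ⟨⟨hx, hx0⟩, hy, hy0⟩
    refine ⟨fun i j hij => hx ?_, fun i j hij => hy ?_⟩
    · exact (div_left_inj' two_ne_zero).1
        ((pow_left_inj₀ (half_pos (hx0 i)).le (half_pos (hx0 j)).le two_ne_zero).1 hij)
    · exact (pow_left_inj₀ (hy0 i).le (hy0 j).le two_ne_zero).1 hij

theorem prod_besselCoeff (α : ℝ) (N : ℕ) :
    ∏ k : Fin N, besselCoeff α k =
      (∏ k : Fin N, (Real.Gamma ((k : ℕ) + 1) * Real.Gamma (α + (k : ℕ) + 1)))⁻¹ := by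
  rw [← Finset.prod_inv_distrib]
  refine Finset.prod_congr rfl fun k _ => ?_
  rw [besselCoeff, Real.Gamma_nat_eq_factorial, add_comm α]

/-- If `α + k + 1` is a pole of `Γ` for some `k < N`, the limit is `0`, in accordance with
`x / 0 = 0`. -/
theorem stmt_6_general (α : ℝ) (b : Fin N → ℝ) :
    Tendsto
      (fun p : (Fin N → ℝ) × (Fin N → ℝ) =>
        (of fun i j => besselKernel α (p.1 i) (p.2 j)).det /
          ((∏ k, p.2 k ^ (2 * α + 1)) * vandermondeProd p.1 *
            vandermondeProd fun k => p.2 k ^ 2))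
      (𝓝[{p | (Function.Injective p.1 ∧ ∀ i, 0 < p.1 i) ∧
        (Function.Injective p.2 ∧ ∀ i, 0 < p.2 i)}] (b, 0))
      (𝓝 (besselLimitFactor α b /
        ∏ k : Fin N, (Real.Gamma ((k : ℕ) + 1) * Real.Gamma (α + (k : ℕ) + 1)))) := by
  have tendsto_factor : Tendsto
      (fun p : (Fin N → ℝ) × (Fin N → ℝ) =>
        besselLimitFactor α p.1 * ∏ j, Real.exp (-p.2 j ^ 2 / 2))
      (𝓝 (b, 0)) (𝓝 (besselLimitFactor α b)) :=
    Continuous.tendsto' (by unfold besselLimitFactor; fun_prop) _ _ (by simp)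
  rw [div_eq_mul_inv, ← prod_besselCoeff]
  refine ((tendsto_factor.mono_left nhdsWithin_le_nhds).mul
    ((tendsto_det_tsum_mul_pow_div_vandermonde (summable_norm_besselCoeff_mul_pow α) _).comp
      (tendsto_half_sq_prodMk_sq b))).congr' ?_
  filter_upwards [self_mem_nhdsWithin] with p ⟨⟨_, hx⟩, _, hy⟩
  exact (det_besselKernel_div_eq α hx hy).symm

end Bessel

theorem stmt_6 (α : ℝ) (hα : -1 < α) (N : ℕ) (hN : 1 ≤ N) (a : ℝ) (ha : 0 < a) :
    Filter.Tendsto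
      (fun p : (Fin N → ℝ) × (Fin N → ℝ) =>
        (Matrix.of fun i j : Fin N =>
          ((p.2 j) ^ (α + 1) / (p.1 i) ^ α) *
            Real.exp (-((p.1 i) ^ 2 + (p.2 j) ^ 2) / 2) * besselI α (p.1 i * p.2 j)).det /
          ((∏ k : Fin N, (p.2 k) ^ (2 * α + 1)) * vandermondeProd p.1 *
            vandermondeProd (fun k : Fin N => (p.2 k) ^ 2)))
      (nhdsWithin ((fun _ => a), 0)
        {p : (Fin N → ℝ) × (Fin N → ℝ) |
          (Function.Injective p.1 ∧ ∀ i, 0 < p.1 i) ∧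
            (Function.Injective p.2 ∧ ∀ i, 0 < p.2 i)})
      (nhds (a ^ (N * (N - 1) / 2) * Real.exp (-a ^ 2 * (N : ℝ) / 2) *
        (2 : ℝ) ^ (-((N : ℝ) * ((N : ℝ) - 1 + 2 * α)) / 2) /
          ∏ k : Fin N, (Real.Gamma ((k : ℕ) + 1) * Real.Gamma (α + (k : ℕ) + 1)))) := by
  rw [← besselLimitFactor_const]
  exact stmt_6_general α fun _ => a
end

section
/- Let α > −1 be real, N ≥ 1, c > 0, let (v_n)_{n≥1} be a strictly increasing sequence of positive reals, and let (u_n)_{n≥1} be real numbers such that for every integer k ≥ 0 and every 0 ≤ i ≤ N−1 the series Σ_{n=1}^∞ v_n^k · |u_n| · |J_α^{(i)}(c v_n)| and Σ_{n=1}^∞ v_n^k · |u_n| · ( |J_α(c v_n)| + |J_{α+1}(c v_n)| ) converge. Set n_1 := ⌈N/2⌉, and define the moments m_k^{(1)} := Σ_{n=1}^∞ v_n^{2k+α} · J_α(c v_n) · u_n and m_k^{(2)} := Σ_{n=1}^∞ v_n^{2k+α+1} · J_{α+1}(c v_n) · u_n for k ≥ 0. Let H_N be the determinant of the N×N matrix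 whose (i,j) entry equals m_{i+j−2}^{(1)} for 1 ≤ i ≤ n_1 and equals m_{(i−n_1)+j−2}^{(2)} for n_1 + 1 ≤ i ≤ N. Then det_{1≤i,j≤N}[ Σ_{n=1}^∞ (−1)^{i−1} · v_n^{i+2j+α−3} · J_α^{(i−1)}(c v_n) · u_n ] = (−1)^{(N(N−3) + 2 n_1²)/4} · H_N, where the exponent (N(N−3) + 2 n_1²)/4 is an integer. -/
/-- The Bessel function of the first kind, for `x > 0`,
`J_α(x) = Σ_{k=0}^∞ (-1)^k (x/2)^{2k+α} / (k! Γ(k+α+1))`. -/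
noncomputable def besselJ (α x : ℝ) : ℝ :=
  ∑' k : ℕ, (-1 : ℝ) ^ k * (x / 2) ^ (2 * (k : ℝ) + α) /
    ((Nat.factorial k : ℝ) * Real.Gamma ((k : ℝ) + α + 1))

/-!
The relations `x J_α' = α J_α - x J_{α+1}` and `x J_{α+1}' = x J_α - (α + 1) J_{α+1}` say that the
Euler derivation `x d/dx` maps each function of the sequence `J_α, x J_{α+1}, x² J_α, x³ J_{α+1}, …`
to a combination of itself and `±` the next one. Hence `x ^ i J_α⁽ⁱ⁾` is a triangular combination of
the first `i + 1` of them, and the matrix of derivative sums factors as a lower triangular matrix,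
whose `i`-th diagonal entry is `(-1) ^ ⌊i / 2⌋`, times the moment matrix with its two Hankel blocks
interleaved. Sorting the rows back into blocks is a permutation of sign `(-1) ^ (⌈N / 2⌉ choose 2)`,
and together the signs give `(-1) ^ (⌊N / 2⌋ choose 2)`.
-/

open Finset

section EulerDerivation

/-- Coefficients of the `E r` in `x ^ i * (E 0)⁽ⁱ⁾` for a sequence of functions on which the Euler
derivation `x * d/dx` acts by `E r ↦ d r * E r + s r * E (r + 1)`. The recursion reflects the
identity `x ^ (i + 1) * f⁽ⁱ⁺¹⁾ = (x * d/dx - i) (x ^ i * f⁽ⁱ⁾)`. -/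
def eulerCoeff {R : Type*} [CommRing R] (d s : ℕ → R) : ℕ → ℕ → R
  | 0, 0 => 1
  | 0, _ + 1 => 0
  | i + 1, 0 => (d 0 - i) * eulerCoeff d s i 0
  | i + 1, r + 1 => (d (r + 1) - i) * eulerCoeff d s i (r + 1) + s r * eulerCoeff d s i r

variable {R : Type*} [CommRing R] (d s : ℕ → R)

lemma eulerCoeff_eq_zero_of_lt {i r : ℕ} (hir : i < r) : eulerCoeff d s i r = 0 := by
  induction i generalizing r with
  | zero => obtain ⟨r, rfl⟩ := Nat.exists_eq_add_one.mpr hir; simp only [eulerCoeff]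
  | succ i ih =>
    obtain ⟨r, rfl⟩ := Nat.exists_eq_add_one.mpr (Nat.zero_lt_of_lt hir)
    simp only [eulerCoeff, ih (show i < r + 1 by lia), ih (show i < r by lia), mul_zero, add_zero]

lemma eulerCoeff_self (i : ℕ) : eulerCoeff d s i i = ∏ r ∈ range i, s r := by
  induction i with
  | zero => simp only [eulerCoeff, range_zero, prod_empty]
  | succ i ih =>
    rw [eulerCoeff, eulerCoeff_eq_zero_of_lt d s i.lt_succ_self, ih, prod_range_succ]
    ring

lemma sum_eulerCoeff_succ_mul (e : ℕ → R) {i N : ℕ} (hi : i + 1 < N) :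
    ∑ r ∈ range N, eulerCoeff d s (i + 1) r * e r =
      ∑ r ∈ range N, eulerCoeff d s i r * (d r * e r + s r * e (r + 1)) -
        i * ∑ r ∈ range N, eulerCoeff d s i r * e r := by
  obtain ⟨M, rfl⟩ := Nat.exists_eq_add_one.mpr (Nat.zero_lt_of_lt hi)
  have htop : eulerCoeff d s i M = 0 := eulerCoeff_eq_zero_of_lt d s (by lia)
  have hshift : ∑ r ∈ range (M + 1), eulerCoeff d s i r * (s r * e (r + 1)) =
      ∑ r ∈ range M, eulerCoeff d s i r * (s r * e (r + 1)) := by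
    rw [sum_range_succ, htop, zero_mul, add_zero]
  have hdiag : ∑ r ∈ range (M + 1), eulerCoeff d s i r * (d r * e r) -
      i * ∑ r ∈ range (M + 1), eulerCoeff d s i r * e r =
      ∑ r ∈ range (M + 1), (d r - i) * eulerCoeff d s i r * e r := by
    rw [mul_sum, ← sum_sub_distrib]
    exact sum_congr rfl fun r _ => by ring
  simp only [mul_add, sum_add_distrib]
  rw [add_sub_right_comm, hdiag, hshift, sum_range_succ', sum_range_succ' _ M]
  simp only [eulerCoeff]
  rw [add_right_comm, ← sum_add_distrib]
  exact congrArg (· + _) (sum_congr rfl fun r _ => by ring)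

lemma natCast_mul_pow_sub_one {K : Type*} [Field K] (n : ℕ) {x : K} (hx : x ≠ 0) :
    (n : K) * x ^ (n - 1) = n * x ^ n / x := by
  cases n with
  | zero => simp only [Nat.cast_zero, zero_mul, zero_div]
  | succ n => rw [Nat.add_sub_cancel, pow_succ, ← mul_assoc, mul_div_cancel_right₀ _ hx]

theorem pow_mul_iteratedDeriv_eq_sum_eulerCoeff {𝕜 : Type*} [NontriviallyNormedField 𝕜]
    {d s : ℕ → 𝕜} {E : ℕ → 𝕜 → 𝕜} {U : Set 𝕜} (hU : IsOpen U) (hU0 : 0 ∉ U)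
    (hE : ∀ r, ∀ x ∈ U, HasDerivAt (E r) ((d r * E r x + s r * E (r + 1) x) / x) x)
    {i N : ℕ} (hi : i < N) {x : 𝕜} (hx : x ∈ U) :
    x ^ i * iteratedDeriv i (E 0) x = ∑ r ∈ range N, eulerCoeff d s i r * E r x := by
  induction i generalizing x with
  | zero =>
    rw [sum_eq_single_of_mem 0 (mem_range.mpr hi) fun r _ hr => by
      rw [eulerCoeff_eq_zero_of_lt d s (Nat.pos_of_ne_zero hr), zero_mul]]
    simp only [pow_zero, iteratedDeriv_zero, eulerCoeff]
  | succ i ih =>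
    have hne : ∀ y ∈ U, y ≠ 0 := fun y hy h => hU0 (h ▸ hy)
    have hx0 : x ≠ 0 := hne x hx
    have hlocal : iteratedDeriv i (E 0) =ᶠ[nhds x]
        fun y => (∑ r ∈ range N, eulerCoeff d s i r * E r y) / y ^ i := by
      filter_upwards [hU.mem_nhds hx] with y hy
      rw [← ih (by lia) hy, mul_div_cancel_left₀ _ (pow_ne_zero i (hne y hy))]
    have hsum : HasDerivAt (fun y => ∑ r ∈ range N, eulerCoeff d s i r * E r y)
        ((∑ r ∈ range N, eulerCoeff d s i r * (d r * E r x + s r * E (r + 1) x)) / x) x := by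
      simp only [sum_div, mul_div_assoc]
      exact HasDerivAt.fun_sum fun r _ => (hE r x hx).const_mul _
    have hquot := hsum.fun_div (hasDerivAt_pow i x) (pow_ne_zero i hx0)
    rw [iteratedDeriv_succ, (hquot.congr_of_eventuallyEq hlocal).deriv,
      natCast_mul_pow_sub_one i hx0, sum_eulerCoeff_succ_mul d s _ hi]
    field_simp
    ring

end EulerDerivation

section BesselClifford

/-- The `k`-th term of the power series of the Bessel–Clifford function `C_α` at `z`. -/
noncomputable def besselCliffordTerm (α z : ℝ) (k : ℕ) : ℝ :=
  z ^ k / (k.factorial * Real.Gamma (k + α + 1))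

/-- The Bessel–Clifford function `C_α(z) = ∑ₖ zᵏ / (k! Γ(k + α + 1))`, the entire function with
`J_α(x) = (x / 2) ^ α * C_α(-(x / 2) ^ 2)`. -/
noncomputable def besselClifford (α z : ℝ) : ℝ := ∑' k : ℕ, besselCliffordTerm α z k

/- At the poles of `Γ` Mathlib has `Γ s = 0`, and `0⁻¹ = 0` is then the correct value of the entire
function `1 / Γ`. -/
lemma inv_realGamma_eq_mul_inv_realGamma_add_one (s : ℝ) :
    (Real.Gamma s)⁻¹ = s * (Real.Gamma (s + 1))⁻¹ := by
  rcases eq_or_ne s 0 with rfl | hs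
  · simp only [Real.Gamma_zero, inv_zero, zero_mul]
  · rw [Real.Gamma_add_one hs, mul_inv, mul_inv_cancel_left₀ hs]

lemma besselCliffordTerm_eq_mul (α z : ℝ) (k : ℕ) :
    besselCliffordTerm α z k = (k + α + 1) * besselCliffordTerm (α + 1) z k := by
  rw [besselCliffordTerm, besselCliffordTerm, div_eq_mul_inv, mul_inv,
    inv_realGamma_eq_mul_inv_realGamma_add_one, div_eq_mul_inv, mul_inv, ← add_assoc (k : ℝ)]
  ring

lemma besselCliffordTerm_succ (α z : ℝ) (k : ℕ) :
    besselCliffordTerm α z (k + 1) = z / (k + 1) * besselCliffordTerm (α + 1) z k := by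
  rw [besselCliffordTerm, besselCliffordTerm, Nat.factorial_succ, Nat.cast_mul, Nat.cast_succ,
    show (k : ℝ) + 1 + α + 1 = k + (α + 1) + 1 by ring, div_mul_div_comm, pow_succ', mul_assoc]

lemma summable_besselCliffordTerm (α z : ℝ) : Summable (besselCliffordTerm α z) := by
  refine .of_norm_bounded_eventually_nat (Real.summable_pow_div_factorial |z|) ?_
  filter_upwards [Filter.eventually_ge_atTop ⌈1 - α⌉₊] with k hk
  have htwo : 2 ≤ (k : ℝ) + α + 1 := by linarith [Nat.ceil_le.mp hk]
  have hGamma : 1 ≤ Real.Gamma (k + α + 1) := by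
    simpa only [Real.Gamma_two] using
      Real.Gamma_strictMonoOn_Ici.monotoneOn Set.self_mem_Ici htwo htwo
  rw [besselCliffordTerm, norm_div, norm_pow, Real.norm_eq_abs, Real.norm_of_nonneg (by positivity)]
  gcongr
  exact le_mul_of_one_le_right (by positivity) hGamma

lemma hasSum_besselClifford (α z : ℝ) :
    HasSum (besselCliffordTerm α z) (besselClifford α z) :=
  (summable_besselCliffordTerm α z).hasSum

lemma abs_besselCliffordTerm_le {x y : ℝ} (hxy : |x| ≤ |y|) (α : ℝ) (k : ℕ) :
    |besselCliffordTerm α x k| ≤ |besselCliffordTerm α y k| := by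
  simp only [besselCliffordTerm, abs_div, abs_pow]
  gcongr

lemma hasDerivAt_besselCliffordTerm_succ (α z : ℝ) (k : ℕ) :
    HasDerivAt (besselCliffordTerm α · (k + 1)) (besselCliffordTerm (α + 1) z k) z := by
  refine ((hasDerivAt_pow (k + 1) z).div_const _).congr_deriv ?_
  rw [besselCliffordTerm, Nat.factorial_succ, Nat.cast_mul, Nat.cast_succ, Nat.add_sub_cancel,
    mul_assoc, mul_div_mul_left _ _ (by positivity),
    show (k : ℝ) + 1 + α + 1 = k + (α + 1) + 1 by ring]

theorem hasDerivAt_besselClifford (α z : ℝ) :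
    HasDerivAt (besselClifford α) (besselClifford (α + 1) z) z := by
  have hsplit : besselClifford α = fun y =>
      besselCliffordTerm α 0 0 + ∑' k, besselCliffordTerm α y (k + 1) := by
    ext y
    rw [besselClifford, (summable_besselCliffordTerm α y).tsum_eq_zero_add]
    simp only [besselCliffordTerm, pow_zero]
  rw [hsplit]
  refine .const_add _ ?_
  refine hasDerivAt_tsum_of_isPreconnected (t := Metric.ball 0 (|z| + 1)) (y₀ := z)
    (summable_besselCliffordTerm (α + 1) (|z| + 1)).abs Metric.isOpen_ball
    (convex_ball _ _).isPreconnected (fun k y _ => hasDerivAt_besselCliffordTerm_succ α y k)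
    (fun k y hy => abs_besselCliffordTerm_le ?_ _ _) ?_
    ((summable_nat_add_iff 1).mpr (summable_besselCliffordTerm α z)) ?_
  · exact (mem_ball_zero_iff.mp hy).le.trans (le_abs_self _)
  all_goals exact mem_ball_zero_iff.mpr (lt_add_one |z|)

theorem besselClifford_eq_add (α z : ℝ) :
    besselClifford α z =
      (α + 1) * besselClifford (α + 1) z + z * besselClifford (α + 1 + 1) z := by
  have hindex : HasSum (fun k : ℕ => k * besselCliffordTerm (α + 1) z k)
      (z * besselClifford (α + 1 + 1) z) := by
    rw [← hasSum_nat_add_iff' 1, sum_range_one, Nat.cast_zero, zero_mul, sub_zero]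
    refine ((hasSum_besselClifford (α + 1 + 1) z).mul_left z).congr_fun fun k => ?_
    rw [besselCliffordTerm_succ, Nat.cast_succ]
    field_simp
  have hconst := (hasSum_besselClifford (α + 1) z).mul_left (α + 1)
  refine (hasSum_besselClifford α z).unique ((hconst.add hindex).congr_fun fun k => ?_)
  rw [besselCliffordTerm_eq_mul]
  ring

end BesselClifford

section BesselJ

variable {x : ℝ}

lemma besselJ_eq_rpow_mul_besselClifford (α : ℝ) (hx : 0 < x) :
    besselJ α x = (x / 2) ^ α * besselClifford α (-(x / 2) ^ 2) := by
  rw [besselJ, besselClifford, ← tsum_mul_left]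
  refine tsum_congr fun k => ?_
  have hpow : (x / 2) ^ (2 * (k : ℝ) + α) = (x / 2) ^ α * ((x / 2) ^ 2) ^ k := by
    rw [add_comm, Real.rpow_add (by positivity), ← pow_mul, ← Real.rpow_natCast]
    push_cast
    rfl
  rw [hpow, besselCliffordTerm, neg_pow ((x / 2) ^ 2)]
  ring

lemma besselJ_recurrence (α : ℝ) (hx : 0 < x) :
    besselJ α x + besselJ (α + 1 + 1) x = 2 * (α + 1) / x * besselJ (α + 1) x := by
  have hx2 : x / 2 ≠ 0 := by positivity
  simp only [besselJ_eq_rpow_mul_besselClifford _ hx]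
  rw [besselClifford_eq_add α, Real.rpow_add_one hx2 (α + 1), Real.rpow_add_one hx2 α]
  field_simp
  ring

theorem hasDerivAt_besselJ (α : ℝ) (hx : 0 < x) :
    HasDerivAt (besselJ α) (α / x * besselJ α x - besselJ (α + 1) x) x := by
  have hx2 : x / 2 ≠ 0 := by positivity
  have hhalf : HasDerivAt (fun y : ℝ => y / 2) (1 / 2) x := (hasDerivAt_id x).div_const 2
  have hprod := (hhalf.rpow_const (p := α) (.inl hx2)).fun_mul
    ((hasDerivAt_besselClifford α (-(x / 2) ^ 2)).comp x (hhalf.fun_pow 2).fun_neg)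
  have hlocal : besselJ α =ᶠ[nhds x]
      fun y => (y / 2) ^ α * besselClifford α (-(y / 2) ^ 2) := by
    filter_upwards [lt_mem_nhds hx] with y hy using besselJ_eq_rpow_mul_besselClifford α hy
  refine (hprod.congr_of_eventuallyEq hlocal).congr_deriv ?_
  simp only [besselJ_eq_rpow_mul_besselClifford _ hx]
  rw [Real.rpow_add_one hx2, Real.rpow_sub_one hx2]
  simp only [Function.comp_apply]
  field_simp
  ring

theorem hasDerivAt_besselJ_add_one (α : ℝ) (hx : 0 < x) :
    HasDerivAt (besselJ (α + 1)) (besselJ α x - (α + 1) / x * besselJ (α + 1) x) x :=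
  (hasDerivAt_besselJ (α + 1) hx).congr_deriv <| by
    linear_combination -besselJ_recurrence α hx

/-- The order, `α` for even `r` and `α + 1` for odd `r`, of the Bessel function that multiplies
`x ^ r` in the expansion of the derivatives of `J_α`. -/
noncomputable def alternatingOrder (α : ℝ) (r : ℕ) : ℝ := if Even r then α else α + 1

lemma alternatingOrder_of_even (α : ℝ) {r : ℕ} (hr : Even r) : alternatingOrder α r = α :=
  if_pos hr

lemma alternatingOrder_of_odd (α : ℝ) {r : ℕ} (hr : Odd r) : alternatingOrder α r = α + 1 :=
  if_neg (Nat.not_even_iff_odd.mpr hr)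

lemma two_mul_half_add_alternatingOrder (α : ℝ) (r : ℕ) :
    2 * ((r / 2 : ℕ) : ℝ) + alternatingOrder α r = r + α := by
  obtain ⟨m, rfl | rfl⟩ := r.even_or_odd'
  · rw [alternatingOrder_of_even α (even_two_mul m), Nat.mul_div_cancel_left m two_pos]
    push_cast
    rfl
  · rw [alternatingOrder_of_odd α (odd_two_mul_add_one m), show (2 * m + 1) / 2 = m by lia]
    push_cast
    ring

lemma hasDerivAt_besselJ_alternatingOrder (α : ℝ) (r : ℕ) (hx : 0 < x) :
    HasDerivAt (besselJ (alternatingOrder α r))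
      ((-1) ^ r * (alternatingOrder α r / x * besselJ (alternatingOrder α r) x -
        besselJ (alternatingOrder α (r + 1)) x)) x := by
  rcases r.even_or_odd with hr | hr
  · rw [alternatingOrder_of_even α hr, alternatingOrder_of_odd α hr.add_one, hr.neg_one_pow,
      one_mul]
    exact hasDerivAt_besselJ α hx
  · rw [alternatingOrder_of_odd α hr, alternatingOrder_of_even α hr.add_one, hr.neg_one_pow,
      neg_one_mul, neg_sub]
    exact hasDerivAt_besselJ_add_one α hx

lemma hasDerivAt_pow_mul_besselJ_alternatingOrder (α : ℝ) (r : ℕ) (hx : 0 < x) :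
    HasDerivAt (fun y => y ^ r * besselJ (alternatingOrder α r) y)
      (((r + (-1) ^ r * alternatingOrder α r) * (x ^ r * besselJ (alternatingOrder α r) x) +
        (-1) ^ (r + 1) * (x ^ (r + 1) * besselJ (alternatingOrder α (r + 1)) x)) / x) x := by
  refine ((hasDerivAt_pow r x).fun_mul
    (hasDerivAt_besselJ_alternatingOrder α r hx)).congr_deriv ?_
  rw [natCast_mul_pow_sub_one r hx.ne']
  field_simp
  ring

/-- Coefficients `a i r` of the expansion `x ^ i * J_α⁽ⁱ⁾(x) = ∑ᵣ a i r * x ^ r * J_β(x)`, where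
`β = alternatingOrder α r`. -/
noncomputable def besselDerivCoeff (α : ℝ) : ℕ → ℕ → ℝ :=
  eulerCoeff (fun r => r + (-1) ^ r * alternatingOrder α r) fun r => (-1) ^ (r + 1)

theorem pow_mul_iteratedDeriv_besselJ (α : ℝ) {i N : ℕ} (hi : i < N) (hx : 0 < x) :
    x ^ i * iteratedDeriv i (besselJ α) x =
      ∑ r ∈ range N, besselDerivCoeff α i r * (x ^ r * besselJ (alternatingOrder α r) x) := by
  have hzero : besselJ α = fun y => y ^ 0 * besselJ (alternatingOrder α 0) y := by
    simp only [alternatingOrder_of_even α Even.zero, pow_zero, one_mul]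
  rw [hzero]
  exact pow_mul_iteratedDeriv_eq_sum_eulerCoeff isOpen_Ioi Set.self_notMem_Ioi
    (E := fun r y => y ^ r * besselJ (alternatingOrder α r) y)
    (fun r y hy => hasDerivAt_pow_mul_besselJ_alternatingOrder α r hy) hi hx

end BesselJ

section Signs

variable {M : Type*} [CommMonoid M] [HasDistribNeg M]

lemma prod_range_neg_one_pow (n : ℕ) : ∏ i ∈ range n, (-1 : M) ^ i = (-1) ^ (n / 2) := by
  induction n with
  | zero => simp only [range_zero, prod_empty, Nat.zero_div, pow_zero]
  | succ n ih =>
    rw [prod_range_succ, ih, ← pow_add]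
    exact neg_one_pow_congr (by grind)

lemma neg_one_pow_mul_prod_range_neg_one_pow_succ (n : ℕ) :
    (-1 : M) ^ n * ∏ i ∈ range n, (-1 : M) ^ (i + 1) = (-1) ^ (n / 2) := by
  simp only [pow_succ (-1 : M), prod_mul_distrib, prod_const, card_range, prod_range_neg_one_pow]
  rw [mul_left_comm, ← mul_pow, neg_one_mul, neg_neg, one_pow, mul_one]

lemma choose_two_add_one (n : ℕ) : (n + 1).choose 2 = n + n.choose 2 := by
  rw [Nat.choose_succ_succ' n 1, Nat.choose_one_right]

lemma sum_range_half (n : ℕ) :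
    ∑ i ∈ range n, i / 2 = ((n + 1) / 2).choose 2 + (n / 2).choose 2 := by
  induction n with
  | zero => rfl
  | succ n ih =>
    rw [sum_range_succ, ih, show (n + 1 + 1) / 2 = n / 2 + 1 by lia, choose_two_add_one]
    ring

lemma prod_range_even_neg_one_pow_half (n : ℕ) :
    ∏ j ∈ range n, (if Even j then (-1 : M) ^ (j / 2) else 1) =
      (-1) ^ ((n + 1) / 2).choose 2 := by
  induction n with
  | zero => simp
  | succ n ih =>
    rw [prod_range_succ, ih]
    split_ifs with hn
    · rw [← pow_add, show (n + 1 + 1) / 2 = n / 2 + 1 by lia, show (n + 1) / 2 = n / 2 by grind,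
        choose_two_add_one, add_comm]
    · rw [mul_one, show (n + 1 + 1) / 2 = (n + 1) / 2 by grind]

lemma exists_hankelSignExponent_eq (N : ℕ) : ∃ k : ℤ,
    (N : ℤ) * (N - 3) + 2 * (((N + 1) / 2 : ℕ) : ℤ) ^ 2 = 4 * ((N / 2).choose 2 + 2 * k) := by
  have htriangle (n : ℕ) : (n : ℤ) * (n - 1) = 2 * n.choose 2 := by
    induction n with
    | zero => rfl
    | succ n ih =>
      rw [choose_two_add_one]
      push_cast
      linear_combination ih
  obtain ⟨n, rfl | rfl⟩ := N.even_or_odd'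
  · refine ⟨n.choose 2, ?_⟩
    rw [show (2 * n + 1) / 2 = n by lia, show 2 * n / 2 = n by lia]
    push_cast
    linear_combination 6 * htriangle n
  · refine ⟨n.choose 2 + n, ?_⟩
    rw [show (2 * n + 1 + 1) / 2 = n + 1 by lia, show (2 * n + 1) / 2 = n by lia]
    push_cast
    linear_combination 6 * htriangle n

end Signs

section Deinterleave

/-- The permutation of `0, …, N - 1` moving the even indices, in order, in front of the odd ones:
`2 * m ↦ m` and `2 * m + 1 ↦ ⌈N / 2⌉ + m`. -/
def deinterleave (N : ℕ) : Equiv.Perm (Fin N) where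
  toFun r := ⟨if Even (r : ℕ) then r / 2 else (N + 1) / 2 + r / 2, by grind⟩
  invFun i := ⟨if (i : ℕ) < (N + 1) / 2 then 2 * i else 2 * (i - (N + 1) / 2) + 1, by grind⟩
  left_inv r := by grind
  right_inv i := by grind

lemma deinterleave_apply_of_even {N : ℕ} {r : Fin N} (hr : Even (r : ℕ)) :
    (deinterleave N r : ℕ) = r / 2 := if_pos hr

lemma deinterleave_apply_of_odd {N : ℕ} {r : Fin N} (hr : Odd (r : ℕ)) :
    (deinterleave N r : ℕ) = (N + 1) / 2 + r / 2 := if_neg (Nat.not_even_iff_odd.mpr hr)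

lemma deinterleave_lt_iff_of_lt {N : ℕ} {i j : Fin N} (hij : i < j) :
    deinterleave N i < deinterleave N j ↔ ¬ (Even (j : ℕ) ∧ Odd (i : ℕ)) := by
  rw [Fin.lt_def] at hij ⊢
  rcases (i : ℕ).even_or_odd with hi | hi <;> rcases (j : ℕ).even_or_odd with hj | hj <;>
    simp only [deinterleave_apply_of_even, deinterleave_apply_of_odd, hi, hj] <;> grind

lemma sign_deinterleave (N : ℕ) :
    Equiv.Perm.sign (deinterleave N) = (-1) ^ ((N + 1) / 2).choose 2 := by
  have hinversions (j : Fin N) :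
      ∏ i ∈ Iio j, (if deinterleave N i < deinterleave N j then 1 else -1) =
        if Even (j : ℕ) then (-1 : ℤˣ) ^ ((j : ℕ) / 2) else 1 := by
    calc ∏ i ∈ Iio j, (if deinterleave N i < deinterleave N j then 1 else -1)
      _ = ∏ i ∈ Iio j, (if Even (j : ℕ) then (-1 : ℤˣ) ^ (i : ℕ) else 1) := by
        refine prod_congr rfl fun i hi => ?_
        simp only [deinterleave_lt_iff_of_lt (mem_Iio.mp hi), neg_one_pow_eq_ite]
        grind
      _ = ∏ i ∈ range j, (if Even (j : ℕ) then (-1 : ℤˣ) ^ i else 1) := by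
        rw [← Nat.Iio_eq_range, ← Fin.map_valEmbedding_Iio, prod_map]
        rfl
      _ = if Even (j : ℕ) then (-1 : ℤˣ) ^ ((j : ℕ) / 2) else 1 := by
        split_ifs
        · exact prod_range_neg_one_pow _
        · exact prod_const_one
  rw [Equiv.Perm.sign_eq_prod_prod_Iio]
  simp only [hinversions]
  rw [← prod_range fun j => if Even j then (-1 : ℤˣ) ^ (j / 2) else 1,
    prod_range_even_neg_one_pow_half]

end Deinterleave

section BesselMoments

variable {ι : Type*} (α c : ℝ) (v u : ι → ℝ) (N : ℕ)

/-- The moment `∑ₙ vₙ ^ (2 * k + β) * J_β(c * vₙ) * uₙ`; the two families `m_k⁽¹⁾` and `m_k⁽²⁾`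
are the cases `β = α` and `β = α + 1`. -/
noncomputable def besselMoment (β : ℝ) (k : ℕ) : ℝ :=
  ∑' n, v n ^ (2 * (k : ℝ) + β) * besselJ β (c * v n) * u n

/-- The matrix whose determinant is `H_N`: `⌈N / 2⌉` Hankel rows of moments of order `α`, followed
by Hankel rows of moments of order `α + 1`. -/
noncomputable def besselHankel : Matrix (Fin N) (Fin N) ℝ :=
  .of fun i j => if (i : ℕ) < (N + 1) / 2 then besselMoment c v u α (i + j)
    else besselMoment c v u (α + 1) (i - (N + 1) / 2 + j)

/-- The matrix of the moments of the signed derivatives of `J_α`. -/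
noncomputable def besselDerivMatrix : Matrix (Fin N) (Fin N) ℝ :=
  .of fun i j => ∑' n, (-1) ^ (i : ℕ) * v n ^ ((i : ℝ) + 2 * (j : ℝ) + α) *
    iteratedDeriv i (besselJ α) (c * v n) * u n

/-- The transition matrix expressing the derivative rows through the rows of `besselHankel`, the
latter interleaved so that row `r` belongs to `x ^ r * J_β(x)` with `β = alternatingOrder α r`. -/
noncomputable def besselTransition : Matrix (Fin N) (Fin N) ℝ :=
  .of fun i r => (-1) ^ (i : ℕ) * besselDerivCoeff α i r * (c ^ (r : ℕ) / c ^ (i : ℕ))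

variable {c}

lemma besselHankel_deinterleave_apply (r j : Fin N) :
    besselHankel α c v u N (deinterleave N r) j =
      besselMoment c v u (alternatingOrder α r) (r / 2 + j) := by
  rw [besselHankel, Matrix.of_apply]
  rcases (r : ℕ).even_or_odd with hr | hr
  · rw [deinterleave_apply_of_even hr, alternatingOrder_of_even α hr, if_pos (by lia)]
  · rw [deinterleave_apply_of_odd hr, alternatingOrder_of_odd α hr, if_neg (by lia),
      Nat.add_sub_cancel_left]

lemma det_besselTransition (hc : c ≠ 0) :
    (besselTransition α c N).det = ∏ i ∈ range N, (-1) ^ (i / 2) := by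
  have hlower : (besselTransition α c N).IsLowerTriangular := fun i r hir => by
    have hlt : (i : ℕ) < r := hir
    rw [besselTransition, Matrix.of_apply, besselDerivCoeff, eulerCoeff_eq_zero_of_lt _ _ hlt,
      mul_zero, zero_mul]
  rw [Matrix.det_of_isLowerTriangular _ hlower, prod_range]
  refine prod_congr rfl fun i _ => ?_
  rw [besselTransition, Matrix.of_apply, besselDerivCoeff, eulerCoeff_self,
    div_self (pow_ne_zero _ hc), mul_one, neg_one_pow_mul_prod_range_neg_one_pow_succ]

lemma rpow_mul_iteratedDeriv_besselJ_eq_sum (hc : 0 < c) {w : ℝ} (hw : 0 < w) (i j : Fin N) :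
    (-1) ^ (i : ℕ) * w ^ ((i : ℝ) + 2 * (j : ℝ) + α) * iteratedDeriv i (besselJ α) (c * w) =
      ∑ r : Fin N, besselTransition α c N i r *
        (w ^ (2 * ((r / 2 + j : ℕ) : ℝ) + alternatingOrder α r) *
          besselJ (alternatingOrder α r) (c * w)) := by
  have hsplit (r : ℕ) : w ^ ((r : ℝ) + 2 * (j : ℝ) + α) = w ^ r * w ^ (2 * (j : ℝ) + α) := by
    rw [add_assoc, Real.rpow_add hw, Real.rpow_natCast]
  have hexponent (r : ℕ) :
      2 * ((r / 2 + j : ℕ) : ℝ) + alternatingOrder α r = r + 2 * (j : ℝ) + α := by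
    push_cast
    linear_combination two_mul_half_add_alternatingOrder α r
  have hexpand := pow_mul_iteratedDeriv_besselJ α i.isLt (mul_pos hc hw)
  rw [sum_range] at hexpand
  calc (-1) ^ (i : ℕ) * w ^ ((i : ℝ) + 2 * (j : ℝ) + α) * iteratedDeriv i (besselJ α) (c * w)
    _ = (-1) ^ (i : ℕ) * w ^ (2 * (j : ℝ) + α) / c ^ (i : ℕ) *
        ((c * w) ^ (i : ℕ) * iteratedDeriv i (besselJ α) (c * w)) := by
      rw [hsplit, mul_pow]
      field_simp
    _ = _ := by
      rw [hexpand, mul_sum]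
      refine sum_congr rfl fun r _ => ?_
      rw [hexponent, hsplit, besselTransition, Matrix.of_apply, mul_pow]
      field_simp

variable {α v u} in
lemma besselDerivMatrix_eq_mul (hc : 0 < c) (hv : ∀ n, 0 < v n)
    (hmoment : ∀ r k : ℕ, Summable fun n => v n ^ (2 * (k : ℝ) + alternatingOrder α r) *
      besselJ (alternatingOrder α r) (c * v n) * u n) :
    besselDerivMatrix α c v u N =
      besselTransition α c N * (besselHankel α c v u N).submatrix (deinterleave N) id := by
  ext i j
  simp only [Matrix.mul_apply, Matrix.submatrix_apply, id, besselHankel_deinterleave_apply,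
    besselMoment, ← tsum_mul_left]
  rw [← Summable.tsum_finsetSum fun r _ => (hmoment _ _).mul_left _, besselDerivMatrix,
    Matrix.of_apply]
  refine tsum_congr fun n => ?_
  rw [rpow_mul_iteratedDeriv_besselJ_eq_sum α N hc (hv n), sum_mul]
  exact sum_congr rfl fun r _ => by ring

variable {α v u} in
theorem det_besselDerivMatrix (hc : 0 < c) (hv : ∀ n, 0 < v n)
    (hmoment : ∀ r k : ℕ, Summable fun n => v n ^ (2 * (k : ℝ) + alternatingOrder α r) *
      besselJ (alternatingOrder α r) (c * v n) * u n) :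
    (besselDerivMatrix α c v u N).det = (-1) ^ (N / 2).choose 2 * (besselHankel α c v u N).det := by
  rw [besselDerivMatrix_eq_mul N hc hv hmoment, Matrix.det_mul, det_besselTransition α N hc.ne',
    Matrix.det_permute, sign_deinterleave, prod_pow_eq_pow_sum, sum_range_half, pow_add]
  push_cast
  rw [← mul_assoc, mul_right_comm ((-1 : ℝ) ^ _), ← mul_pow, neg_one_mul, neg_neg, one_pow, one_mul]

end BesselMoments

lemma summable_rpow_mul_of_summable_pow_mul {ι : Type*} {v u g w : ι → ℝ} {δ : ℝ} (hδ : 0 < δ)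
    (hv : ∀ n, δ ≤ v n) (hg : ∀ n, |g n| ≤ w n)
    (hw : ∀ k : ℕ, Summable fun n => v n ^ k * |u n| * w n) (β : ℝ) :
    Summable fun n => v n ^ β * g n * u n := by
  set m := ⌈β⌉₊
  refine .of_norm_bounded ((hw m).mul_left (δ ^ (β - m))) fun n => ?_
  have hvn : 0 < v n := hδ.trans_le (hv n)
  have hrpow : v n ^ β ≤ δ ^ (β - m) * v n ^ m :=
    calc v n ^ β = v n ^ (β - m) * v n ^ m := by
          rw [← Real.rpow_natCast, ← Real.rpow_add hvn, sub_add_cancel]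
      _ ≤ δ ^ (β - m) * v n ^ m := by
          gcongr ?_ * _
          exact Real.rpow_le_rpow_of_nonpos hδ (hv n) (sub_nonpos.mpr (Nat.le_ceil β))
  calc ‖v n ^ β * g n * u n‖ = v n ^ β * |g n| * |u n| := by
        rw [norm_mul, norm_mul, Real.norm_of_nonneg (by positivity), Real.norm_eq_abs,
          Real.norm_eq_abs]
    _ ≤ δ ^ (β - m) * v n ^ m * w n * |u n| := by gcongr; exact hg n
    _ = δ ^ (β - m) * (v n ^ m * |u n| * w n) := by ring

theorem stmt_13_general {ι : Type*} (α : ℝ) (N : ℕ) (c : ℝ) (hc : 0 < c)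
    (v : ι → ℝ) (hvpos : ∀ n, 0 < v n) (u : ι → ℝ)
    (hsum₁ : ∀ k : ℕ, Summable fun n =>
      v n ^ (2 * (k : ℝ) + α) * besselJ α (c * v n) * u n)
    (hsum₂ : ∀ k : ℕ, Summable fun n =>
      v n ^ (2 * (k : ℝ) + α + 1) * besselJ (α + 1) (c * v n) * u n)
    (n₁ : ℕ) (hn₁ : n₁ = (N + 1) / 2) :
    (4 : ℤ) ∣ ((N : ℤ) * ((N : ℤ) - 3) + 2 * (n₁ : ℤ) ^ 2) ∧
    (Matrix.of fun i j : Fin N =>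
        ∑' n, (-1 : ℝ) ^ (i : ℕ) *
          v n ^ (((i : ℕ) : ℝ) + 2 * ((j : ℕ) : ℝ) + α) *
          iteratedDeriv (i : ℕ) (besselJ α) (c * v n) * u n).det
      = (-1 : ℝ) ^ (((N : ℤ) * ((N : ℤ) - 3) + 2 * (n₁ : ℤ) ^ 2) / 4) *
        (Matrix.of fun i j : Fin N =>
          if (i : ℕ) < n₁ then
            ∑' n, v n ^ (2 * (((i : ℕ) + (j : ℕ) : ℕ) : ℝ) + α) *
              besselJ α (c * v n) * u n
          else
            ∑' n, v n ^ (2 * ((((i : ℕ) - n₁ + (j : ℕ)) : ℕ) : ℝ) + α + 1) *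
              besselJ (α + 1) (c * v n) * u n).det := by
  subst hn₁
  obtain ⟨k, hexponent⟩ := exists_hankelSignExponent_eq N
  have hsign : (-1 : ℝ) ^ ((N / 2).choose 2 + 2 * k : ℤ) = (-1) ^ (N / 2).choose 2 := by
    rw [zpow_add₀ (by norm_num), zpow_mul, zpow_natCast, even_two.neg_one_zpow, one_zpow, mul_one]
  have hmoment (r k : ℕ) : Summable fun n => v n ^ (2 * (k : ℝ) + alternatingOrder α r) *
      besselJ (alternatingOrder α r) (c * v n) * u n := by
    rcases r.even_or_odd with hr | hr
    · simpa only [alternatingOrder_of_even α hr] using hsum₁ k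
    · simpa only [alternatingOrder_of_odd α hr, add_assoc] using hsum₂ k
  rw [hexponent, Int.mul_ediv_cancel_left _ four_ne_zero, hsign]
  refine ⟨dvd_mul_right _ _, ?_⟩
  simpa only [besselDerivMatrix, besselHankel, besselMoment, add_assoc] using
    det_besselDerivMatrix N hc hvpos hmoment

theorem stmt_13 (α : ℝ) (hα : -1 < α) (N : ℕ) (hN : 1 ≤ N) (c : ℝ) (hc : 0 < c)
    (v : ℕ → ℝ) (hvmono : StrictMono v) (hvpos : ∀ n, 0 < v n) (u : ℕ → ℝ)
    (hsum : ∀ k : ℕ, ∀ i < N,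
      (Summable fun n : ℕ =>
        v n ^ k * |u n| * |iteratedDeriv i (besselJ α) (c * v n)|) ∧
      (Summable fun n : ℕ =>
        v n ^ k * |u n| * (|besselJ α (c * v n)| + |besselJ (α + 1) (c * v n)|)))
    (n₁ : ℕ) (hn₁ : n₁ = (N + 1) / 2) :
    (4 : ℤ) ∣ ((N : ℤ) * ((N : ℤ) - 3) + 2 * (n₁ : ℤ) ^ 2) ∧
    (Matrix.of fun i j : Fin N =>
        ∑' n : ℕ, (-1 : ℝ) ^ (i : ℕ) *
          v n ^ (((i : ℕ) : ℝ) + 2 * ((j : ℕ) : ℝ) + α) *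
          iteratedDeriv (i : ℕ) (besselJ α) (c * v n) * u n).det
      = (-1 : ℝ) ^ (((N : ℤ) * ((N : ℤ) - 3) + 2 * (n₁ : ℤ) ^ 2) / 4) *
        (Matrix.of fun i j : Fin N =>
          if (i : ℕ) < n₁ then
            ∑' n : ℕ, v n ^ (2 * (((i : ℕ) + (j : ℕ) : ℕ) : ℝ) + α) *
              besselJ α (c * v n) * u n
          else
            ∑' n : ℕ, v n ^ (2 * ((((i : ℕ) - n₁ + (j : ℕ)) : ℕ) : ℝ) + α + 1) *
              besselJ (α + 1) (c * v n) * u n).det := by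
  have hv (n : ℕ) : v 0 ≤ v n := hvmono.monotone n.zero_le
  exact stmt_13_general α N c hc v hvpos u
    (fun k => summable_rpow_mul_of_summable_pow_mul (hvpos 0) hv
      (fun n => le_add_of_nonneg_right (abs_nonneg _)) (fun k => (hsum k 0 hN).2) _)
    (fun k => summable_rpow_mul_of_summable_pow_mul (hvpos 0) hv
      (fun n => le_add_of_nonneg_left (abs_nonneg _)) (fun k => (hsum k 0 hN).2) _) n₁ hn₁
end
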